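/- Let −1 < β < 0 and ν > −1/2. Then sup_{x > 0} { ( e^{−βx} K_ν(x) / x^{ν−1} ) · ∫_0^x e^{βt} t^ν I_ν(t) dt } ≥ 1/(2(1+β)). -/

import Mathlib

open Real MeasureTheory

/-- Modified Bessel function of the first kind, `I_ν(x) = ∑_{k} (x/2)^{ν+2k} / (Γ(ν+k+1) k!)`. -/
noncomputable def besselI (ν x : ℝ) : ℝ :=
  ∑' k : ℕ, (x / 2) ^ (ν + 2 * (k : ℝ)) / (Real.Gamma (ν + (k : ℝ) + 1) * (Nat.factorial k : ℝ))

/-- Modified Bessel function of the second kind, `K_ν(x) = ∫_0^∞ e^{-x cosh t} cosh(ν t) dt`. -/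
noncomputable def besselK (ν x : ℝ) : ℝ :=
  ∫ t in Set.Ioi (0 : ℝ), Real.exp (-x * Real.cosh t) * Real.cosh (ν * t)

/-- Lower incomplete gamma function `γ(a, x) = ∫_0^x t^{a-1} e^{-t} dt`. -/
noncomputable def lowerIncGamma (a x : ℝ) : ℝ :=
  ∫ t in (0 : ℝ)..x, t ^ (a - 1) * Real.exp (-t)

/-!
The supremum of a bounded function on `(0, ∞)` is at least its limit at `∞`, so it suffices to show
that the product tends to `1 / (2 (1 + β))` and is bounded; without boundedness `sSup` would be `0`.

For `ν > -1/2`, Poisson's integral expresses `t ^ (-ν) I_ν(t)` as a constant multiple of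
`∫_0^1 (1 - s²) ^ (ν - 1/2) cosh (ts) ds`, whose mass concentrates at `s = 1` as `t → ∞`. This gives
`I_ν(x) ~ e ^ x / √(2πx)`, and Laplace's method on the integral defining `K_ν` gives
`K_ν(x) ~ √(π / (2x)) e ^ (-x)`. By L'Hôpital's rule,
`∫_0^x e ^ (βt) t ^ ν I_ν(t) dt ~ e ^ ((1 + β) x) x ^ (ν - 1/2) / (√(2π) (1 + β))`, and in the
product all exponentials and powers of `x` cancel.

Near `0` the integral is `O(x ^ (2ν + 1))`, which leaves `x ^ (ν + 2) K_ν(x)` to be bounded; it is,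
because `ν + 2 > |ν|`.
-/

section

open Set Filter Topology Asymptotics
open scoped Interval

theorem one_add_sq_div_two_le_cosh (x : ℝ) : 1 + x ^ 2 / 2 ≤ cosh x := by
  have half_angle : cosh x = 1 + 2 * sinh (|x| / 2) ^ 2 := by
    rw [← cosh_abs, ← mul_div_cancel₀ |x| (two_ne_zero' ℝ), cosh_two_mul, cosh_sq]
    ring_nf
  have : |x| / 2 ≤ sinh (|x| / 2) := self_le_sinh_iff.2 (by positivity)
  have : (|x| / 2) ^ 2 ≤ sinh (|x| / 2) ^ 2 := by gcongr
  rw [div_pow, sq_abs] at this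
  linarith

theorem cosh_sub_one_le (x : ℝ) : cosh x - 1 ≤ x ^ 2 / 2 * exp (x ^ 2 / 2) := by
  have h := mul_le_mul_of_nonneg_right (one_sub_le_exp_neg (x ^ 2 / 2)) (exp_pos (x ^ 2 / 2)).le
  rw [← exp_add, neg_add_cancel, exp_zero] at h
  linarith [cosh_le_exp_half_sq x]

theorem cosh_le_exp_abs (x : ℝ) : cosh x ≤ exp |x| := by
  rw [← cosh_abs, ← cosh_add_sinh]
  linarith [sinh_nonneg_iff.2 (abs_nonneg x)]

theorem tendsto_mul_cosh_div_sqrt_sub_one (s : ℝ) :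
    Tendsto (fun x ↦ x * (cosh (s / √x) - 1)) atTop (𝓝 (s ^ 2 / 2)) := by
  have upper : Tendsto (fun x ↦ s ^ 2 / 2 * exp (s ^ 2 / 2 / x)) atTop (𝓝 (s ^ 2 / 2)) := by
    have h : Tendsto (fun x ↦ s ^ 2 / 2 / x) atTop (𝓝 0) := tendsto_const_nhds.div_atTop tendsto_id
    simpa using h.rexp.const_mul (s ^ 2 / 2)
  have sq_div_sqrt {x : ℝ} (hx : 0 < x) : (s / √x) ^ 2 / 2 = s ^ 2 / 2 / x := by
    rw [div_pow, sq_sqrt hx.le, div_right_comm]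
  refine tendsto_const_nhds.squeeze' upper ?_ ?_ <;>
    filter_upwards [eventually_gt_atTop 0] with x hx
  · have h := one_add_sq_div_two_le_cosh (s / √x)
    rw [sq_div_sqrt hx] at h
    rw [← div_le_iff₀' hx]
    linarith
  · have h := cosh_sub_one_le (s / √x)
    rw [sq_div_sqrt hx, div_mul_eq_mul_div] at h
    exact (le_div_iff₀' hx).1 h

theorem rpow_mul_exp_neg_le {p y : ℝ} (hp : 0 < p) (hy : 0 ≤ y) : y ^ p * exp (-y) ≤ p ^ p := by
  have h : (y / p) ^ p ≤ exp (y / p) ^ p := by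
    gcongr
    linarith [add_one_le_exp (y / p)]
  rw [← exp_mul, div_mul_cancel₀ _ hp.ne', div_rpow hy hp.le, div_le_iff₀' (by positivity)] at h
  rwa [exp_neg, ← div_eq_mul_inv, div_le_iff₀ (exp_pos y)]

theorem rpow_le_rpow_abs {x b : ℝ} (hx : 1 ≤ x) (hxb : x ≤ b) (r : ℝ) : x ^ r ≤ b ^ |r| :=
  (rpow_le_rpow_of_exponent_le hx (le_abs_self r)).trans
    (rpow_le_rpow (by linarith) hxb (abs_nonneg r))

/-! ### Asymptotics of antiderivatives and of truncated integrals -/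

theorem isLittleO_of_hasDerivAt {E : Type*} [NormedAddCommGroup E] [NormedSpace ℝ E]
    {f f' : ℝ → E} {g g' : ℝ → ℝ} (hf : ∀ᶠ x in atTop, HasDerivAt f (f' x) x)
    (hg : ∀ᶠ x in atTop, HasDerivAt g (g' x) x) (hg' : ∀ᶠ x in atTop, 0 ≤ g' x)
    (hg_top : Tendsto g atTop atTop) (h : f' =o[atTop] g') : f =o[atTop] g := by
  refine isLittleO_iff.2 fun c hc ↦ ?_
  have hc2 : 0 < c / 2 := half_pos hc
  obtain ⟨X, hX⟩ := eventually_atTop.1 (hf.and (hg.and (hg'.and (h.def hc2))))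
  have growth {x : ℝ} (hx : X ≤ x) : ‖f x‖ ≤ ‖f X‖ + c / 2 * (g x - g X) := by
    have hfX : ∀ y ≥ X, HasDerivAt f (f' y) y := fun y hy ↦ (hX y hy).1
    have hgX : ∀ y ≥ X, HasDerivAt (fun x ↦ ‖f X‖ + c / 2 * (g x - g X)) (c / 2 * g' y) y :=
      fun y hy ↦ (((hX y hy).2.1.sub_const _).const_mul _).const_add _
    refine image_norm_le_of_norm_deriv_right_le_deriv_boundary' (a := X) (b := x)
      (fun y hy ↦ (hfX y hy.1).continuousAt.continuousWithinAt)
      (fun y hy ↦ (hfX y hy.1).hasDerivWithinAt) (by simp)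
      (fun y hy ↦ (hgX y hy.1).continuousAt.continuousWithinAt)
      (fun y hy ↦ (hgX y hy.1).hasDerivWithinAt) (fun y hy ↦ ?_) ⟨hx, le_rfl⟩
    obtain ⟨-, -, hpos, hle⟩ := hX y hy.1
    rwa [norm_of_nonneg hpos] at hle
  filter_upwards [eventually_ge_atTop X, hg_top.eventually_ge_atTop 0,
    (hg_top.const_mul_atTop hc2).eventually_ge_atTop (‖f X‖ - c / 2 * g X)] with x hx hpos hlarge
  rw [norm_of_nonneg hpos]
  linarith [growth hx]

/- L'Hôpital's rule for `∞ / ∞`. -/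
theorem isEquivalent_of_hasDerivAt {f f' g g' : ℝ → ℝ}
    (hf : ∀ᶠ x in atTop, HasDerivAt f (f' x) x) (hg : ∀ᶠ x in atTop, HasDerivAt g (g' x) x)
    (hg' : ∀ᶠ x in atTop, 0 ≤ g' x) (hg_top : Tendsto g atTop atTop) (h : f' ~[atTop] g') :
    f ~[atTop] g :=
  isLittleO_of_hasDerivAt ((hf.and hg).mono fun _ hx ↦ hx.1.sub hx.2) hg hg' hg_top h

theorem isEquivalent_exp_mul_rpow_of_hasDerivAt {f f' : ℝ → ℝ} {b c r : ℝ} (hb : 0 < b)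
    (hc : 0 < c) (hf : ∀ᶠ x in atTop, HasDerivAt f (f' x) x)
    (h : f' ~[atTop] fun x ↦ c * (exp (b * x) * x ^ r)) :
    f ~[atTop] fun x ↦ c / b * (exp (b * x) * x ^ r) := by
  have hasDeriv : ∀ᶠ x in atTop, HasDerivAt (fun x ↦ c / b * (exp (b * x) * x ^ r))
      (c * (exp (b * x) * x ^ r) * (1 + r / b / x)) x := by
    filter_upwards [eventually_gt_atTop 0] with x hx
    have := (((hasDerivAt_id x).const_mul b).exp.mul
      (hasDerivAt_rpow_const (p := r) (Or.inl hx.ne'))).const_mul (c / b)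
    refine this.congr_deriv ?_
    rw [rpow_sub_one hx.ne', id]
    field_simp
  have correction : Tendsto (fun x ↦ 1 + r / b / x) atTop (𝓝 1) := by
    have : Tendsto (fun x ↦ r / b / x) atTop (𝓝 0) := tendsto_const_nhds.div_atTop tendsto_id
    simpa using this.const_add 1
  have tendsto_top : Tendsto (fun x ↦ c / b * (exp (b * x) * x ^ r)) atTop atTop := by
    refine ((tendsto_exp_mul_div_rpow_atTop (-r) b hb).const_mul_atTop (div_pos hc hb)).congr' ?_
    filter_upwards [eventually_ge_atTop 0] with x hx
    rw [rpow_neg hx, div_inv_eq_mul]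
  refine isEquivalent_of_hasDerivAt hf hasDeriv ?_ tendsto_top (h.trans ?_)
  · filter_upwards [eventually_gt_atTop 0, correction.eventually_const_le one_pos] with x hx h1
    positivity
  · have := (IsEquivalent.refl (u := fun x ↦ c * (exp (b * x) * x ^ r)) (l := atTop)).mul
      ((isEquivalent_const_iff_tendsto one_ne_zero).2 correction).symm
    simpa [Pi.mul_def] using this

theorem tendsto_intervalIntegral_atTop_of_dominated {E : Type*} [NormedAddCommGroup E]
    [NormedSpace ℝ E] {μ : Measure ℝ} {a : ℝ} {F : ℝ → ℝ → E} {f : ℝ → E} (bound : ℝ → ℝ)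
    (hF_meas : ∀ᶠ t in atTop, AEStronglyMeasurable (F t) (μ.restrict (Ioi a)))
    (h_bound : ∀ᶠ t in atTop, ∀ v ∈ Ioc a t, ‖F t v‖ ≤ bound v)
    (bound_integrable : IntegrableOn bound (Ioi a) μ)
    (h_lim : ∀ v ∈ Ioi a, Tendsto (fun t ↦ F t v) atTop (𝓝 (f v))) :
    Tendsto (fun t ↦ ∫ v in a..t, F t v ∂μ) atTop (𝓝 (∫ v in Ioi a, f v ∂μ)) := by
  have bound_nonneg : ∀ v ∈ Ioi a, 0 ≤ bound v := fun v hv ↦ by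
    obtain ⟨t, ht, hvt⟩ := (h_bound.and (eventually_ge_atTop v)).exists
    exact (norm_nonneg _).trans (ht v ⟨hv, hvt⟩)
  have truncation : (fun t ↦ ∫ v in Ioi a, (Iic t).indicator (F t) v ∂μ) =ᶠ[atTop]
      fun t ↦ ∫ v in a..t, F t v ∂μ := by
    filter_upwards [eventually_ge_atTop a] with t ht
    rw [setIntegral_indicator measurableSet_Iic, Ioi_inter_Iic, intervalIntegral.integral_of_le ht]
  refine Tendsto.congr' truncation
    (tendsto_integral_filter_of_dominated_convergence bound ?_ ?_ bound_integrable ?_)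
  · exact hF_meas.mono fun t ht ↦ ht.indicator measurableSet_Iic
  · filter_upwards [h_bound] with t ht
    refine ae_restrict_of_forall_mem measurableSet_Ioi fun v hv ↦ ?_
    by_cases hvt : v ∈ Iic t
    · simpa only [indicator_of_mem hvt] using ht v ⟨hv, hvt⟩
    · simpa only [indicator_of_notMem hvt, norm_zero] using bound_nonneg v hv
  · refine ae_restrict_of_forall_mem measurableSet_Ioi fun v hv ↦ (h_lim v hv).congr' ?_
    filter_upwards [eventually_ge_atTop v] with t ht
    exact (indicator_of_mem (mem_Iic.2 ht) _).symm

/-! ### Poisson's integral for `I_ν` -/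

theorem integral_rpow_mul_one_sub_rpow {p q : ℝ} (hp : 0 < p) (hq : 0 < q) :
    ∫ x in (0 : ℝ)..1, x ^ (p - 1) * (1 - x) ^ (q - 1) = Gamma p * Gamma q / Gamma (p + q) := by
  have beta : Complex.betaIntegral p q =
      ((∫ x in (0 : ℝ)..1, x ^ (p - 1) * (1 - x) ^ (q - 1) : ℝ) : ℂ) := by
    rw [Complex.betaIntegral, ← intervalIntegral.integral_ofReal]
    refine intervalIntegral.integral_congr fun x hx ↦ ?_
    rw [uIcc_of_le zero_le_one] at hx
    simp [Complex.ofReal_cpow hx.1, Complex.ofReal_cpow (sub_nonneg.2 hx.2)]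
  have h := ProbabilityTheory.beta_eq_betaIntegralReal p q hp hq
  rwa [beta, Complex.ofReal_re, ProbabilityTheory.beta, eq_comm] at h

theorem integral_rpow_mul_one_sub_sq_rpow {p q : ℝ} (hp : 0 < p) (hq : 0 < q) :
    ∫ s in (0 : ℝ)..1, s ^ (p - 1) * (1 - s ^ 2) ^ (q - 1) =
      Gamma (p / 2) * Gamma q / (2 * Gamma (p / 2 + q)) := by
  have subst := integral_Icc_deriv_smul_of_deriv_nonneg (a := 0) (b := 1) (f := fun s ↦ s ^ 2)
    (f' := fun s ↦ 2 * s) (g := fun x : ℝ ↦ x ^ (p / 2 - 1) * (1 - x) ^ (q - 1))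
    (by fun_prop) (fun s _ ↦ by simpa using hasDerivAt_pow 2 s)
    (fun s hs ↦ by linarith [hs.1]) zero_le_one
  have integrand : ∀ s ∈ Ioc (0 : ℝ) 1, s ^ (p - 1) * (1 - s ^ 2) ^ (q - 1) =
      1 / 2 * ((2 * s) • ((s ^ 2) ^ (p / 2 - 1) * (1 - s ^ 2) ^ (q - 1))) := fun s hs ↦ by
    have : s ^ (p - 1) = s * (s ^ 2) ^ (p / 2 - 1) := by
      rw [← rpow_natCast_mul hs.1.le, mul_comm, ← rpow_add_one hs.1.ne']
      congr 1
      push_cast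
      ring
    rw [this, smul_eq_mul]
    ring
  have beta := integral_rpow_mul_one_sub_rpow (half_pos hp) hq
  rw [intervalIntegral.integral_of_le zero_le_one] at beta
  rw [integral_Icc_eq_integral_Ioc, integral_Icc_eq_integral_Ioc, zero_pow two_ne_zero, one_pow,
    beta] at subst
  rw [intervalIntegral.integral_of_le zero_le_one,
    setIntegral_congr_fun measurableSet_Ioc integrand, integral_const_mul, subst]
  ring

theorem Gamma_natCast_add_half_mul_factorial (k : ℕ) :
    Gamma (k + 1 / 2) * k.factorial = (2 * k).factorial * √π / 4 ^ k := by
  have h := Gamma_mul_Gamma_add_half (k + 1 / 2)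
  rw [show (k : ℝ) + 1 / 2 + 1 / 2 = k + 1 by ring, Gamma_nat_eq_factorial,
    show 2 * ((k : ℝ) + 1 / 2) = (2 * k : ℕ) + 1 by push_cast; ring, Gamma_nat_eq_factorial,
    show (1 : ℝ) - ((2 * k : ℕ) + 1) = -(2 * k : ℕ) by ring, rpow_neg zero_le_two, rpow_natCast,
    pow_mul, show (2 : ℝ) ^ 2 = 4 by norm_num] at h
  rw [h]
  ring

section Poisson

variable {ν : ℝ}

theorem integral_one_sub_sq_rpow_mul_pow_div_factorial (hν : -(1 / 2) < ν) (k : ℕ) :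
    ∫ s in (0 : ℝ)..1, (1 - s ^ 2) ^ (ν - 1 / 2) * (s ^ (2 * k) / (2 * k).factorial) =
      √π * Gamma (ν + 1 / 2) / 2 / (4 ^ k * (Gamma (ν + k + 1) * k.factorial)) := by
  have h := integral_rpow_mul_one_sub_sq_rpow (p := 2 * k + 1) (q := ν + 1 / 2) (by positivity)
    (by linarith)
  rw [show ((2 : ℝ) * k + 1) / 2 = k + 1 / 2 by ring, show ν + 1 / 2 - 1 = ν - 1 / 2 by ring,
    show (k : ℝ) + 1 / 2 + (ν + 1 / 2) = ν + k + 1 by ring] at h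
  have integrand (s : ℝ) : (1 - s ^ 2) ^ (ν - 1 / 2) * (s ^ (2 * k) / (2 * k).factorial) =
      s ^ ((2 : ℝ) * k + 1 - 1) * (1 - s ^ 2) ^ (ν - 1 / 2) / (2 * k).factorial := by
    rw [add_sub_cancel_right, show (2 : ℝ) * k = (2 * k : ℕ) by push_cast; ring, rpow_natCast]
    ring
  have hΓ : Gamma (ν + k + 1) ≠ 0 :=
    (Gamma_pos_of_pos (by linarith [(Nat.cast_nonneg k : (0 : ℝ) ≤ k)])).ne'
  have hΓ_half := Gamma_natCast_add_half_mul_factorial k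
  rw [← eq_div_iff (by positivity)] at hΓ_half
  simp_rw [integrand]
  rw [intervalIntegral.integral_div, h, hΓ_half]
  field_simp

theorem intervalIntegrable_one_sub_sq_rpow (hν : -(1 / 2) < ν) :
    IntervalIntegrable (fun s : ℝ ↦ (1 - s ^ 2) ^ (ν - 1 / 2)) volume 0 1 := by
  have singular : IntervalIntegrable (fun s : ℝ ↦ (1 - s) ^ (ν - 1 / 2)) volume 0 1 := by
    simpa using ((intervalIntegral.intervalIntegrable_rpow' (a := 0) (b := 1)
      (show -1 < ν - 1 / 2 by linarith)).comp_sub_left 1).symm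
  have regular : ContinuousOn (fun s : ℝ ↦ (1 + s) ^ (ν - 1 / 2)) (uIcc 0 1) := by
    rw [uIcc_of_le zero_le_one]
    exact ContinuousOn.rpow_const (by fun_prop) fun s hs ↦ Or.inl (by linarith [hs.1])
  refine (singular.mul_continuousOn regular).congr fun s hs ↦ ?_
  rw [uIoc_of_le zero_le_one] at hs
  rw [← mul_rpow (by linarith [hs.2]) (by linarith [hs.1])]
  ring_nf

/-- Poisson's integral, half of `∫ (1 - s²) ^ (ν - 1/2) e ^ (ts) ds` over `[-1, 1]`. Up to a
constant factor it is the entire function `t ^ (-ν) I_ν(t)` when `ν > -1/2`. -/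
noncomputable def poissonIntegral (ν t : ℝ) : ℝ :=
  ∫ s in (0 : ℝ)..1, (1 - s ^ 2) ^ (ν - 1 / 2) * cosh (t * s)

theorem one_sub_sq_rpow_nonneg {s : ℝ} (hs : s ∈ Ι (0 : ℝ) 1) (r : ℝ) : 0 ≤ (1 - s ^ 2) ^ r := by
  rw [uIoc_of_le zero_le_one] at hs
  exact rpow_nonneg (by nlinarith [hs.1, hs.2]) r

theorem hasSum_poissonIntegral (hν : -(1 / 2) < ν) (t : ℝ) :
    HasSum (fun k : ℕ ↦ √π * Gamma (ν + 1 / 2) / 2 *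
      ((t / 2) ^ (2 * k) / (Gamma (ν + k + 1) * k.factorial))) (poissonIntegral ν t) := by
  have termwise : HasSum (fun k : ℕ ↦ ∫ s in (0 : ℝ)..1,
      (1 - s ^ 2) ^ (ν - 1 / 2) * ((t * s) ^ (2 * k) / (2 * k).factorial))
      (poissonIntegral ν t) := by
    refine intervalIntegral.hasSum_integral_of_dominated_convergence
      (fun k s ↦ (1 - s ^ 2) ^ (ν - 1 / 2) * (t ^ (2 * k) / (2 * k).factorial))
      (fun k ↦ (by fun_prop : Measurable _).aestronglyMeasurable)
      (fun k ↦ .of_forall fun s hs ↦ ?_)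
      (.of_forall fun s _ ↦ (hasSum_cosh t).summable.mul_left _) ?_
      (.of_forall fun s _ ↦ (hasSum_cosh (t * s)).mul_left _)
    · have hweight := one_sub_sq_rpow_nonneg hs (ν - 1 / 2)
      rw [uIoc_of_le zero_le_one] at hs
      rw [norm_of_nonneg
        (mul_nonneg hweight (div_nonneg ((even_two_mul k).pow_nonneg _) (by positivity))), mul_pow]
      gcongr
      exact mul_le_of_le_one_right ((even_two_mul k).pow_nonneg _) (pow_le_one₀ hs.1.le hs.2)
    · simp_rw [tsum_mul_left]
      exact (intervalIntegrable_one_sub_sq_rpow hν).mul_const _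
  refine termwise.congr_fun fun k ↦ ?_
  have integrand (s : ℝ) : (1 - s ^ 2) ^ (ν - 1 / 2) * ((t * s) ^ (2 * k) / (2 * k).factorial) =
      t ^ (2 * k) * ((1 - s ^ 2) ^ (ν - 1 / 2) * (s ^ (2 * k) / (2 * k).factorial)) := by ring
  simp_rw [integrand]
  rw [intervalIntegral.integral_const_mul, integral_one_sub_sq_rpow_mul_pow_div_factorial hν,
    div_pow, pow_mul 2 2, show (2 : ℝ) ^ 2 = 4 by norm_num]
  ring

theorem besselI_eq_poissonIntegral (hν : -(1 / 2) < ν) {t : ℝ} (ht : 0 < t) :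
    besselI ν t = (t / 2) ^ ν * (2 / (√π * Gamma (ν + 1 / 2))) * poissonIntegral ν t := by
  rw [← ((hasSum_poissonIntegral hν t).mul_left _).tsum_eq, besselI]
  congr 1 with k
  have hΓ : Gamma (ν + 1 / 2) ≠ 0 := (Gamma_pos_of_pos (by linarith)).ne'
  rw [rpow_add (by positivity), show (2 * (k : ℝ)) = (2 * k : ℕ) by push_cast; ring, rpow_natCast]
  generalize Gamma (ν + 1 / 2) = G at hΓ
  field_simp

theorem continuous_poissonIntegral (hν : -(1 / 2) < ν) : Continuous (poissonIntegral ν) := by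
  refine continuous_iff_continuousAt.2 fun t₀ ↦
    intervalIntegral.continuousAt_of_dominated_interval
      (bound := fun s ↦ (1 - s ^ 2) ^ (ν - 1 / 2) * cosh (|t₀| + 1))
      (.of_forall fun t ↦ (by fun_prop : Measurable _).aestronglyMeasurable) ?_
      ((intervalIntegrable_one_sub_sq_rpow hν).mul_const _) (.of_forall fun s _ ↦ by fun_prop)
  filter_upwards [continuous_abs.continuousAt.eventually_le_const (lt_add_one |t₀|)] with t ht
  refine .of_forall fun s hs ↦ ?_
  have hweight := one_sub_sq_rpow_nonneg hs (ν - 1 / 2)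
  rw [uIoc_of_le zero_le_one] at hs
  rw [norm_of_nonneg (mul_nonneg hweight (cosh_pos _).le)]
  gcongr
  rw [cosh_le_cosh, abs_mul, abs_of_pos hs.1, abs_of_nonneg (by positivity : 0 ≤ |t₀| + 1)]
  exact (mul_le_of_le_one_right (abs_nonneg t) hs.2).trans ht

/- The substitution `s = 1 - v / t` moves the maximum of the integrand to `v = 0`. -/
theorem rpow_mul_exp_neg_mul_poissonIntegral (ν : ℝ) {t : ℝ} (ht : 0 < t) :
    t ^ (ν + 1 / 2) * exp (-t) * poissonIntegral ν t = ∫ v in (0 : ℝ)..t,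
      v ^ (ν - 1 / 2) * (2 - v / t) ^ (ν - 1 / 2) * ((exp (-v) + exp (v - 2 * t)) / 2) := by
  have subst := intervalIntegral.integral_comp_sub_div (a := 0) (b := t)
    (fun s ↦ (1 - s ^ 2) ^ (ν - 1 / 2) * cosh (t * s)) ht.ne' 1
  rw [div_self ht.ne', sub_self, zero_div, sub_zero, smul_eq_mul] at subst
  rw [show ν + 1 / 2 = (ν - 1 / 2) + 1 by ring, rpow_add_one ht.ne', mul_right_comm _ t,
    mul_assoc _ t, poissonIntegral, ← subst, ← intervalIntegral.integral_const_mul]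
  refine intervalIntegral.integral_congr fun v hv ↦ ?_
  rw [uIcc_of_le ht.le] at hv
  have hvt : v / t ≤ 1 := (div_le_one ht).2 hv.2
  have weight : (1 - (1 - v / t) ^ 2) ^ (ν - 1 / 2) =
      v ^ (ν - 1 / 2) / t ^ (ν - 1 / 2) * (2 - v / t) ^ (ν - 1 / 2) := by
    rw [← div_rpow hv.1 ht.le, ← mul_rpow (div_nonneg hv.1 ht.le) (by linarith)]
    ring_nf
  have exponential : exp (-t) * cosh (t * (1 - v / t)) = (exp (-v) + exp (v - 2 * t)) / 2 := by
    rw [mul_sub, mul_one, mul_div_cancel₀ _ ht.ne', cosh_eq, mul_div_assoc', mul_add, ← exp_add,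
      ← exp_add]
    ring_nf
  simp only [weight, ← exponential]
  have : t ^ (ν - 1 / 2) ≠ 0 := by positivity
  field_simp

theorem tendsto_rpow_mul_exp_neg_mul_poissonIntegral (hν : -(1 / 2) < ν) :
    Tendsto (fun t ↦ t ^ (ν + 1 / 2) * exp (-t) * poissonIntegral ν t) atTop
      (𝓝 (2 ^ (ν - 1 / 2) / 2 * Gamma (ν + 1 / 2))) := by
  have hΓ : Gamma (ν + 1 / 2) = ∫ v in Ioi 0, exp (-v) * v ^ (ν - 1 / 2) := by
    rw [Gamma_eq_integral (by linarith)]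
    ring_nf
  have integrable : IntegrableOn (fun v ↦ exp (-v) * v ^ (ν - 1 / 2)) (Ioi 0) := by
    convert GammaIntegral_convergent (s := ν + 1 / 2) (by linarith) using 4
    ring
  rw [hΓ, ← integral_const_mul]
  refine Tendsto.congr' ((eventually_gt_atTop 0).mono fun t ht ↦
    (rpow_mul_exp_neg_mul_poissonIntegral ν ht).symm)
    (tendsto_intervalIntegral_atTop_of_dominated
      (fun v ↦ 2 ^ |ν - 1 / 2| * (exp (-v) * v ^ (ν - 1 / 2)))
      (.of_forall fun t ↦ (by fun_prop : Measurable _).aestronglyMeasurable) ?_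
      (integrable.const_mul _) fun v _ ↦ ?_)
  · filter_upwards [eventually_gt_atTop 0] with t ht v hv
    have hvt : v / t ≤ 1 := (div_le_one ht).2 hv.2
    have hv_pow : 0 ≤ v ^ (ν - 1 / 2) := rpow_nonneg hv.1.le _
    have hfactor_nonneg : 0 ≤ (2 - v / t) ^ (ν - 1 / 2) := rpow_nonneg (by linarith) _
    have hfactor : (2 - v / t) ^ (ν - 1 / 2) ≤ 2 ^ |ν - 1 / 2| :=
      rpow_le_rpow_abs (by linarith) (by linarith [div_pos hv.1 ht]) _
    have hexp : exp (v - 2 * t) ≤ exp (-v) := exp_le_exp.2 (by linarith [hv.2])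
    rw [norm_of_nonneg (by positivity)]
    calc v ^ (ν - 1 / 2) * (2 - v / t) ^ (ν - 1 / 2) * ((exp (-v) + exp (v - 2 * t)) / 2)
        ≤ v ^ (ν - 1 / 2) * 2 ^ |ν - 1 / 2| * ((exp (-v) + exp (-v)) / 2) := by gcongr
      _ = 2 ^ |ν - 1 / 2| * (exp (-v) * v ^ (ν - 1 / 2)) := by ring
  · have factor : Tendsto (fun t ↦ (2 - v / t) ^ (ν - 1 / 2)) atTop (𝓝 (2 ^ (ν - 1 / 2))) := by
      have : Tendsto (fun t ↦ 2 - v / t) atTop (𝓝 (2 - 0)) :=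
        tendsto_const_nhds.sub (tendsto_const_nhds.div_atTop tendsto_id)
      rw [sub_zero] at this
      exact this.rpow_const (Or.inl two_ne_zero)
    have reflected : Tendsto (fun t ↦ exp (v - 2 * t)) atTop (𝓝 0) :=
      tendsto_exp_atBot.comp (tendsto_atBot_add_const_left _ v
        (tendsto_neg_atTop_atBot.comp (tendsto_id.const_mul_atTop two_pos)))
    convert (factor.const_mul (v ^ (ν - 1 / 2))).mul
      ((reflected.const_add (exp (-v))).div_const 2) using 2
    ring

theorem besselI_isEquivalent (hν : -(1 / 2) < ν) :
    besselI ν ~[atTop] fun x ↦ exp x / √(2 * π * x) := by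
  have hΓ : 0 < Gamma (ν + 1 / 2) := Gamma_pos_of_pos (by linarith)
  have h := (tendsto_rpow_mul_exp_neg_mul_poissonIntegral hν).div_const
    (2 ^ (ν - 1 / 2) / 2 * Gamma (ν + 1 / 2))
  rw [div_self (by positivity)] at h
  refine isEquivalent_of_tendsto_one (h.congr' ?_)
  filter_upwards [eventually_gt_atTop 0] with x hx
  rw [Pi.div_apply, besselI_eq_poissonIntegral hν hx, div_rpow hx.le zero_le_two,
    rpow_add hx, rpow_sub two_pos, ← sqrt_eq_rpow, ← sqrt_eq_rpow, exp_neg,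
    sqrt_mul (by positivity), sqrt_mul zero_le_two]
  generalize Gamma (ν + 1 / 2) = G at hΓ
  field_simp

end Poisson

/-! ### Asymptotics and growth of `K_ν` -/

theorem besselK_nonneg (ν x : ℝ) : 0 ≤ besselK ν x :=
  integral_nonneg fun _ ↦ mul_nonneg (exp_pos _).le (cosh_pos _).le

theorem rpow_mul_exp_neg_mul_cosh_le {p x : ℝ} (hp : 0 < p) (hx : 0 < x) (t : ℝ) :
    x ^ p * exp (-x * cosh t) ≤ (2 * p) ^ p * exp (-p * t) := by
  have hcosh : -x * cosh t ≤ -(x * exp t / 2) := by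
    rw [cosh_eq]
    nlinarith [mul_pos hx (exp_pos (-t))]
  have split : x ^ p = 2 ^ p * exp (-p * t) * (x * exp t / 2) ^ p := by
    rw [div_rpow (by positivity) zero_le_two, mul_rpow hx.le (exp_pos t).le, ← exp_mul,
      neg_mul, exp_neg, mul_comm t]
    field_simp
  calc x ^ p * exp (-x * cosh t)
      ≤ x ^ p * exp (-(x * exp t / 2)) := by gcongr
    _ = 2 ^ p * exp (-p * t) * ((x * exp t / 2) ^ p * exp (-(x * exp t / 2))) := by
        rw [split, mul_assoc]
    _ ≤ 2 ^ p * exp (-p * t) * p ^ p := by gcongr; exact rpow_mul_exp_neg_le hp (by positivity)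
    _ = (2 * p) ^ p * exp (-p * t) := by rw [mul_rpow zero_le_two hp.le]; ring

theorem rpow_mul_besselK_le {ν p x : ℝ} (hp : |ν| < p) (hx : 0 < x) :
    x ^ p * besselK ν x ≤ (2 * p) ^ p / (p - |ν|) := by
  have hp0 : 0 < p := (abs_nonneg ν).trans_lt hp
  have hrate : -(p - |ν|) < 0 := by linarith
  have pointwise : ∀ t ∈ Ioi (0 : ℝ), x ^ p * (exp (-x * cosh t) * cosh (ν * t)) ≤
      (2 * p) ^ p * exp (-(p - |ν|) * t) := fun t ht ↦ by
    have hcosh := cosh_le_exp_abs (ν * t)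
    rw [abs_mul, abs_of_pos (mem_Ioi.1 ht)] at hcosh
    calc x ^ p * (exp (-x * cosh t) * cosh (ν * t))
        = x ^ p * exp (-x * cosh t) * cosh (ν * t) := by ring
      _ ≤ (2 * p) ^ p * exp (-p * t) * exp (|ν| * t) :=
          mul_le_mul (rpow_mul_exp_neg_mul_cosh_le hp0 hx t) hcosh (cosh_pos _).le (by positivity)
      _ = (2 * p) ^ p * exp (-(p - |ν|) * t) := by rw [mul_assoc, ← exp_add]; ring_nf
  calc x ^ p * besselK ν x
      = ∫ t in Ioi 0, x ^ p * (exp (-x * cosh t) * cosh (ν * t)) := (integral_const_mul _ _).symm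
    _ ≤ ∫ t in Ioi 0, (2 * p) ^ p * exp (-(p - |ν|) * t) :=
        integral_mono_of_nonneg (.of_forall fun t ↦ by have := cosh_pos (ν * t); positivity)
          ((integrableOn_exp_mul_Ioi hrate 0).const_mul _)
          (ae_restrict_of_forall_mem measurableSet_Ioi pointwise)
    _ = (2 * p) ^ p / (p - |ν|) := by
        rw [integral_const_mul, integral_exp_mul_Ioi hrate, mul_zero, exp_zero, neg_div_neg_eq,
          mul_one_div]

/- The substitution `t = s / √x` turns the exponent into an approximate Gaussian. -/
theorem sqrt_mul_exp_mul_besselK (ν : ℝ) {x : ℝ} (hx : 0 < x) :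
    √x * exp x * besselK ν x =
      ∫ s in Ioi 0, exp (-(x * (cosh (s / √x) - 1))) * cosh (ν * (s / √x)) := by
  have subst := integral_comp_mul_left_Ioi
    (fun t ↦ exp (-(x * (cosh t - 1))) * cosh (ν * t)) 0 (inv_pos.2 (sqrt_pos.2 hx))
  simp only [mul_zero, inv_inv, smul_eq_mul, inv_mul_eq_div] at subst
  rw [subst, mul_assoc, besselK, ← integral_const_mul]
  congr 2 with t
  rw [← mul_assoc, ← exp_add]
  ring_nf

theorem exp_neg_mul_cosh_div_sqrt_sub_one_mul_cosh_le {x s : ℝ} (ν : ℝ) (hx : 1 ≤ x) :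
    exp (-(x * (cosh (s / √x) - 1))) * cosh (ν * (s / √x)) ≤
      exp (ν ^ 2) * exp (-(1 / 4) * s ^ 2) := by
  have hexponent : s ^ 2 / 2 ≤ x * (cosh (s / √x) - 1) := by
    have h := one_add_sq_div_two_le_cosh (s / √x)
    rw [div_pow, sq_sqrt (by linarith)] at h
    calc s ^ 2 / 2 = x * (s ^ 2 / x / 2) := by field_simp
      _ ≤ x * (cosh (s / √x) - 1) := by gcongr; linarith
  have harg : |ν * (s / √x)| ≤ |ν| * |s| := by
    rw [abs_mul, abs_div, abs_of_nonneg (sqrt_nonneg x)]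
    gcongr
    exact div_le_self (abs_nonneg s) (one_le_sqrt.2 hx)
  have amgm : |ν| * |s| ≤ ν ^ 2 + s ^ 2 / 4 := by
    rw [← sq_abs ν, ← sq_abs s]
    nlinarith [sq_nonneg (|ν| - |s| / 2)]
  calc exp (-(x * (cosh (s / √x) - 1))) * cosh (ν * (s / √x))
      ≤ exp (-(s ^ 2 / 2)) * exp (ν ^ 2 + s ^ 2 / 4) := by
        gcongr
        exact (cosh_le_exp_abs _).trans (exp_le_exp.2 (harg.trans amgm))
    _ = exp (ν ^ 2) * exp (-(1 / 4) * s ^ 2) := by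
        rw [← exp_add, ← exp_add]
        ring_nf

theorem tendsto_sqrt_mul_exp_mul_besselK (ν : ℝ) :
    Tendsto (fun x ↦ √x * exp x * besselK ν x) atTop (𝓝 √(π / 2)) := by
  have gaussian : √(π / 2) = ∫ s in Ioi (0 : ℝ), exp (-(1 / 2) * s ^ 2) := by
    rw [integral_gaussian_Ioi, eq_div_iff two_ne_zero, ← sqrt_sq zero_le_two,
      ← sqrt_mul (by positivity)]
    ring_nf
  rw [gaussian]
  refine Tendsto.congr' ((eventually_gt_atTop 0).mono fun x hx ↦
    (sqrt_mul_exp_mul_besselK ν hx).symm)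
    (tendsto_integral_filter_of_dominated_convergence
      (fun s ↦ exp (ν ^ 2) * exp (-(1 / 4) * s ^ 2))
      (.of_forall fun x ↦ (by fun_prop : Measurable _).aestronglyMeasurable) ?_
      ((integrable_exp_neg_mul_sq (by norm_num)).integrableOn.const_mul _)
      (.of_forall fun s ↦ ?_))
  · filter_upwards [eventually_ge_atTop 1] with x hx
    refine .of_forall fun s ↦ ?_
    rw [norm_of_nonneg (mul_nonneg (exp_pos _).le (cosh_pos _).le)]
    exact exp_neg_mul_cosh_div_sqrt_sub_one_mul_cosh_le ν hx
  · have hcosh : Tendsto (fun x ↦ cosh (ν * (s / √x))) atTop (𝓝 1) := by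
      have : Tendsto (fun x ↦ ν * (s / √x)) atTop (𝓝 (ν * 0)) :=
        (tendsto_const_nhds.div_atTop tendsto_sqrt_atTop).const_mul ν
      simpa [Function.comp_def] using (continuous_cosh.tendsto _).comp this
    convert (tendsto_mul_cosh_div_sqrt_sub_one s).neg.rexp.mul hcosh using 2
    ring_nf

theorem besselK_isEquivalent (ν : ℝ) :
    besselK ν ~[atTop] fun x ↦ √(π / (2 * x)) * exp (-x) := by
  have h := (tendsto_sqrt_mul_exp_mul_besselK ν).div_const √(π / 2)
  rw [div_self (by positivity)] at h
  refine isEquivalent_of_tendsto_one (h.congr' ?_)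
  filter_upwards [eventually_gt_atTop 0] with x hx
  rw [Pi.div_apply, ← div_div π, sqrt_div' _ hx.le, exp_neg]
  field_simp

/-! ### The primitive of `e ^ (βt) t ^ ν I_ν(t)` -/

section RpowMulContinuous

variable {f g : ℝ → ℝ} {r : ℝ}

theorem intervalIntegrable_of_eq_rpow_mul (hr : -1 < r) (hg : Continuous g)
    (hf : ∀ t > 0, f t = t ^ r * g t) {x : ℝ} (hx : 0 ≤ x) : IntervalIntegrable f volume 0 x := by
  refine ((intervalIntegral.intervalIntegrable_rpow' hr).mul_continuousOn
    hg.continuousOn).congr fun t ht ↦ ?_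
  rw [uIoc_of_le hx] at ht
  exact (hf t ht.1).symm

theorem hasDerivAt_intervalIntegral_of_eq_rpow_mul (hr : -1 < r) (hg : Continuous g)
    (hf : ∀ t > 0, f t = t ^ r * g t) {x : ℝ} (hx : 0 < x) :
    HasDerivAt (fun x ↦ ∫ t in (0 : ℝ)..x, f t) (f x) x := by
  have hcont : ContinuousOn f (Ioi 0) :=
    (ContinuousOn.mul (continuousOn_id.rpow_const fun t ht ↦ Or.inl (ne_of_gt ht))
      hg.continuousOn).congr hf
  exact intervalIntegral.integral_hasDerivAt_right
    (intervalIntegrable_of_eq_rpow_mul hr hg hf hx.le)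
    (hcont.stronglyMeasurableAtFilter isOpen_Ioi x hx) (hcont.continuousAt (Ioi_mem_nhds hx))

theorem exists_norm_intervalIntegral_le_mul_rpow (hr : -1 < r) (hg : Continuous g)
    (hf : ∀ t > 0, f t = t ^ r * g t) (X : ℝ) :
    ∃ C, ∀ x ∈ Ioc 0 X, ‖∫ t in (0 : ℝ)..x, f t‖ ≤ C * x ^ (r + 1) := by
  obtain ⟨M, hM⟩ := isCompact_Icc.exists_bound_of_continuousOn (hg.continuousOn (s := Icc 0 X))
  refine ⟨M / (r + 1), fun x hx ↦ ?_⟩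
  calc ‖∫ t in (0 : ℝ)..x, f t‖ ≤ ∫ t in (0 : ℝ)..x, t ^ r * M := by
        refine intervalIntegral.norm_integral_le_of_norm_le hx.1.le (.of_forall fun t ht ↦ ?_)
          ((intervalIntegral.intervalIntegrable_rpow' hr).mul_const M)
        have hpow : 0 ≤ t ^ r := rpow_nonneg ht.1.le r
        rw [hf t ht.1, norm_mul, norm_of_nonneg hpow]
        gcongr
        exact hM t ⟨ht.1.le, ht.2.trans hx.2⟩
    _ = M / (r + 1) * x ^ (r + 1) := by
        rw [intervalIntegral.integral_mul_const, integral_rpow (Or.inl hr),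
          zero_rpow (by linarith), sub_zero]
        ring

end RpowMulContinuous

/-- The integral `∫_0^x e ^ (βt) t ^ ν I_ν(t) dt`. -/
noncomputable def besselIIntegral (β ν x : ℝ) : ℝ :=
  ∫ t in (0 : ℝ)..x, exp (β * t) * t ^ ν * besselI ν t

/-- The function `(e ^ (-βx) K_ν(x) / x ^ (ν - 1)) ∫_0^x e ^ (βt) t ^ ν I_ν(t) dt` of `x > 0` whose
supremum is to be estimated. -/
noncomputable def besselProduct (β ν x : ℝ) : ℝ :=
  exp (-β * x) * besselK ν x / x ^ (ν - 1) * besselIIntegral β ν x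

section BesselIIntegral

variable {ν : ℝ}

theorem exists_continuous_exp_mul_rpow_mul_besselI_eq (β : ℝ) (hν : -(1 / 2) < ν) :
    ∃ g : ℝ → ℝ, Continuous g ∧
      ∀ t > 0, exp (β * t) * t ^ ν * besselI ν t = t ^ (2 * ν) * g t := by
  refine ⟨fun t ↦ exp (β * t) * (2 / (√π * Gamma (ν + 1 / 2)) / 2 ^ ν * poissonIntegral ν t),
    (by fun_prop : Continuous fun t ↦ exp (β * t)).mul
      ((continuous_poissonIntegral hν).const_mul _), fun t ht ↦ ?_⟩
  rw [besselI_eq_poissonIntegral hν ht, div_rpow ht.le zero_le_two, two_mul ν, rpow_add ht]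
  ring

theorem exists_norm_besselIIntegral_le_mul_rpow (β : ℝ) (hν : -(1 / 2) < ν) (X : ℝ) :
    ∃ C, ∀ x ∈ Ioc 0 X, ‖besselIIntegral β ν x‖ ≤ C * x ^ (2 * ν + 1) := by
  obtain ⟨g, hg, hf⟩ := exists_continuous_exp_mul_rpow_mul_besselI_eq β hν
  exact exists_norm_intervalIntegral_le_mul_rpow (by linarith) hg hf X

theorem besselIIntegral_isEquivalent {β : ℝ} (hβ : -1 < β) (hν : -(1 / 2) < ν) :
    besselIIntegral β ν ~[atTop]
      fun x ↦ (√(2 * π))⁻¹ / (1 + β) * (exp ((1 + β) * x) * x ^ (ν - 1 / 2)) := by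
  obtain ⟨g, hg, hf⟩ := exists_continuous_exp_mul_rpow_mul_besselI_eq β hν
  refine isEquivalent_exp_mul_rpow_of_hasDerivAt (by linarith) (by positivity)
    ((eventually_gt_atTop 0).mono fun x hx ↦
      hasDerivAt_intervalIntegral_of_eq_rpow_mul (by linarith) hg hf hx) ?_
  refine ((IsEquivalent.refl (u := fun t ↦ exp (β * t) * t ^ ν)).mul
    (besselI_isEquivalent hν)).congr_right ?_
  filter_upwards [eventually_gt_atTop 0] with x hx
  rw [Pi.mul_apply, sqrt_mul (by positivity) x, rpow_sub hx, ← sqrt_eq_rpow, add_mul, one_mul,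
    exp_add]
  ring

theorem tendsto_besselProduct {β : ℝ} (hβ : -1 < β) (hν : -(1 / 2) < ν) :
    Tendsto (besselProduct β ν) atTop (𝓝 (1 / (2 * (1 + β)))) := by
  have h := (((IsEquivalent.refl (u := fun x ↦ exp (-β * x))).mul (besselK_isEquivalent ν)).div
    (IsEquivalent.refl (u := fun x ↦ x ^ (ν - 1)))).mul (besselIIntegral_isEquivalent hβ hν)
  refine IsEquivalent.tendsto_nhds (h.congr_left ?_).symm (tendsto_const_nhds.congr' ?_)
  · exact .of_forall fun x ↦ rfl
  filter_upwards [eventually_gt_atTop 0] with x hx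
  have hexp : exp (-β * x) * exp (-x) * exp ((1 + β) * x) = 1 := by
    rw [← exp_add, ← exp_add, exp_eq_one_iff]
    ring
  have hrpow : x ^ (ν - 1 / 2) = x ^ (ν - 1) * √x := by
    rw [sqrt_eq_rpow, ← rpow_add hx]
    ring_nf
  have hsqrt : √(π / (2 * x)) * √x = √π / √2 := by
    rw [← sqrt_mul (by positivity), ← sqrt_div pi_pos.le]
    congr 1
    field_simp
  have hpow : x ^ (ν - 1) ≠ 0 := by positivity
  simp only [Pi.mul_apply, Pi.div_apply, hrpow]
  calc 1 / (2 * (1 + β)) = √π / √2 * (√(2 * π))⁻¹ / (1 + β) := by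
        rw [sqrt_mul zero_le_two]
        field_simp
        simp
    _ = √(π / (2 * x)) * √x * (√(2 * π))⁻¹ / (1 + β) *
          (exp (-β * x) * exp (-x) * exp ((1 + β) * x)) := by rw [hsqrt, hexp, mul_one]
    _ = _ := by field_simp

theorem bddAbove_besselProduct_image_Ioc (β : ℝ) (hν : -(1 / 2) < ν) (X : ℝ) :
    BddAbove (besselProduct β ν '' Ioc 0 X) := by
  obtain ⟨C, hC⟩ := exists_norm_besselIIntegral_le_mul_rpow β hν X
  have hp : |ν| < ν + 2 := abs_lt.2 ⟨by linarith, by linarith⟩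
  refine ⟨exp (|β| * X) * C * ((2 * (ν + 2)) ^ (ν + 2) / (ν + 2 - |ν|)),
    forall_mem_image.2 fun x hx ↦ ?_⟩
  have hK := besselK_nonneg ν x
  have hpow : 0 < x ^ (ν - 1) := rpow_pos_of_pos hx.1 _
  have hC_nonneg : 0 ≤ C := nonneg_of_mul_nonneg_left ((norm_nonneg _).trans (hC x hx))
    (rpow_pos_of_pos hx.1 _)
  have hexp : exp (-β * x) ≤ exp (|β| * X) :=
    exp_le_exp.2 (mul_le_mul (neg_le_abs β) hx.2 hx.1.le (abs_nonneg β))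
  have split : x ^ (2 * ν + 1) = x ^ (ν - 1) * x ^ (ν + 2) := by
    rw [← rpow_add hx.1]
    ring_nf
  calc besselProduct β ν x
      ≤ exp (-β * x) * besselK ν x / x ^ (ν - 1) * ‖besselIIntegral β ν x‖ := by
        rw [besselProduct]
        gcongr
        exact le_norm_self _
    _ ≤ exp (|β| * X) * besselK ν x / x ^ (ν - 1) * (C * x ^ (2 * ν + 1)) := by
        gcongr
        exact hC x hx
    _ = exp (|β| * X) * C * (x ^ (ν + 2) * besselK ν x) := by
        rw [split]
        field_simp
    _ ≤ exp (|β| * X) * C * ((2 * (ν + 2)) ^ (ν + 2) / (ν + 2 - |ν|)) := by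
        gcongr
        exact rpow_mul_besselK_le hp hx.1

end BesselIIntegral

theorem bddAbove_image_Ioi_of_tendsto {f : ℝ → ℝ} {a l : ℝ} (h_lim : Tendsto f atTop (𝓝 l))
    (h_bdd : ∀ X, BddAbove (f '' Ioc a X)) : BddAbove (f '' Ioi a) := by
  obtain ⟨X, hX⟩ := eventually_atTop.1 (h_lim.eventually_le_const (lt_add_one l))
  have tail : BddAbove (f '' Ici X) := ⟨l + 1, forall_mem_image.2 hX⟩
  refine ((h_bdd X).union tail).mono ?_
  rw [← image_union]
  exact image_mono fun x hx ↦ (le_total x X).imp (fun h ↦ ⟨hx, h⟩) id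

theorem le_sSup_image_Ioi_of_tendsto {f : ℝ → ℝ} {a l : ℝ} (h_lim : Tendsto f atTop (𝓝 l))
    (h_bdd : BddAbove (f '' Ioi a)) : l ≤ sSup (f '' Ioi a) :=
  le_of_tendsto h_lim ((eventually_gt_atTop a).mono fun _ hx ↦
    le_csSup h_bdd (mem_image_of_mem f hx))

theorem stmt_16_general (β ν : ℝ) (hβ : -1 < β) (hν : -(1 / 2) < ν) :
    sSup ((fun x : ℝ => (Real.exp (-β * x) * besselK ν x / x ^ (ν - 1)) *
        ∫ t in (0 : ℝ)..x, Real.exp (β * t) * t ^ ν * besselI ν t) '' Set.Ioi 0) ≥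
      1 / (2 * (1 + β)) := by
  have h_lim := tendsto_besselProduct hβ hν
  have h_bdd := bddAbove_image_Ioi_of_tendsto h_lim (bddAbove_besselProduct_image_Ioc β hν)
  exact le_sSup_image_Ioi_of_tendsto h_lim h_bdd

end

theorem stmt_16 (β ν : ℝ) (hβ0 : -1 < β) (hβ1 : β < 0) (hν : -(1/2) < ν) :
    sSup ((fun x : ℝ => (Real.exp (-β * x) * besselK ν x / x ^ (ν - 1)) *
        ∫ t in (0 : ℝ)..x, Real.exp (β * t) * t ^ ν * besselI ν t) '' Set.Ioi 0) ≥
      1 / (2 * (1 + β)) :=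
  stmt_16_general β ν hβ0 hν
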